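/- Let n ≥ 1, a ∈ (−1,1), and let V : ℝ^{n+1} → ℝ be bounded and measurable. Let U : ℝⁿ × [0,∞) × ℝ → ℝ, written U(x,y,t), be continuous and bounded, smooth on {y > 0}, with ∂_t U and the full spatial gradient ∇U = (∇_x U, ∂_y U) bounded on {y > 0} and extending continuously to {y = 0}. Suppose U satisfies the degenerate equation ∂_t U = Δ_x U + ∂_{yy} U + (a/y) ∂_y U for all y > 0 and t ∈ ℝ, the weighted Neumann condition y^a ∂_y U(x,y,t) → V(x,t) U(x,0,t) as y → 0⁺, locally uniformly in (x,t), and the initial condition U(x,y,0) = 0 for all (x,y) ∈ ℝⁿ × [0,∞). Then U(x,y,t) = 0 for all (x,y) ∈ ℝⁿ × [0,∞) and all t ≥ 0. -/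

import Mathlib

/-! The proof is a maximum principle with an explicit barrier. Put
`φ(y) = 2 - m y^{1-a} + B y²`. Since `y^{1-a}` is annihilated by `∂_yy + (a/y)∂_y` and `y²` is sent
to `2(1+a)`, the function `Ψ(x,y,t) = φ(y) (1 + |x|²) e^{λt}` is a strict supersolution once
`φ ≥ 1` (true for `B` large, `exists_barrier_bound`) and `λ` is large. Moreover
`y^a ∂_y Ψ → -m(1-a)(1 + |x|²)e^{λt}`, which is below `-K Ψ(x,0,t)` as soon as `m(1-a) > 2K`, where
`|V| ≤ K`; and `Ψ` grows at spatial infinity.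

If `U` were positive somewhere at a time `T > 0`, the quotient `U/Ψ` would attain a positive maximum
`q` over `0 ≤ t ≤ T`, so that `U - qΨ ≤ 0` with equality at some point. Contact at `y > 0`
contradicts the strict supersolution property (`interior_contact_absurd`), and contact at `y = 0`
contradicts the Neumann condition (`boundary_contact_absurd`). Working with the quotient makes `U`
equal to `qΨ` at the contact point, so no sign of `V` is needed. Hence `U ≤ 0`
(`nonpos_of_extension_problem`), and the same applied to `-U` gives the theorem. -/

open Filter Topology

/-! ### One-variable calculus -/

/-- Necessary second-order condition at a local maximum. No differentiability is assumed: where a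
second derivative fails to exist, its junk value `0` satisfies the inequality. -/
lemma deriv_deriv_nonpos_of_isLocalMax {h : ℝ → ℝ} {x : ℝ} (hmax : IsLocalMax h x)
    (hc : ContinuousAt h x) : deriv (deriv h) x ≤ 0 := by
  by_contra! hpos
  have hmin := isLocalMin_of_deriv_deriv_pos hpos hmax.deriv_eq_zero hc
  -- a point that is both a local maximum and a local minimum has a constant neighbourhood
  have hconst : h =ᶠ[𝓝 x] fun _ => h x := by
    filter_upwards [hmax, hmin] with y h1 h2 using le_antisymm h1 h2
  have := hconst.deriv.deriv_eq
  simp at this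
  linarith

lemma deriv_deriv_le_of_contact {f g : ℝ → ℝ} {x : ℝ} (hf : ContDiffAt ℝ 2 f x)
    (hg : ContDiffAt ℝ 2 g x) (hle : ∀ᶠ z in 𝓝 x, f z ≤ g z) (heq : f x = g x) :
    deriv f x = deriv g x ∧ deriv (deriv f) x ≤ deriv (deriv g) x := by
  have hmax : IsLocalMax (fun z => f z - g z) x := by
    filter_upwards [hle] with z hz
    linarith
  have hfd := hf.differentiableAt (by norm_num)
  have hgd := hg.differentiableAt (by norm_num)
  constructor
  · have := hmax.deriv_eq_zero
    rw [deriv_fun_sub hfd hgd] at this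
    linarith
  · have h2 := deriv_deriv_nonpos_of_isLocalMax hmax
      (hf.continuousAt.sub hg.continuousAt)
    have key : iteratedDeriv 2 (fun z => f z - g z) x
        = iteratedDeriv 2 f x - iteratedDeriv 2 g x :=
      iteratedDeriv_fun_sub (n := 2) (by exact_mod_cast hf) (by exact_mod_cast hg)
    simp only [iteratedDeriv_succ, iteratedDeriv_zero] at key
    linarith

lemma deriv_le_of_contact_left {f g : ℝ → ℝ} {t : ℝ} (ht : 0 < t) (hf : DifferentiableAt ℝ f t)
    (hg : DifferentiableAt ℝ g t) (hle : ∀ s, 0 ≤ s → s ≤ t → f s ≤ g s) (heq : f t = g t) :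
    deriv g t ≤ deriv f t := by
  have hd := (hf.hasDerivAt.sub hg.hasDerivAt).hasDerivWithinAt (s := Set.Iio t)
  have hs := (hasDerivWithinAt_iff_tendsto_slope' (by simp)).1 hd
  have : 0 ≤ deriv f t - deriv g t := by
    refine ge_of_tendsto hs ?_
    filter_upwards [Ioo_mem_nhdsLT ht] with s hs
    rw [slope_def_field]
    refine div_nonneg_of_nonpos ?_ (by linarith [hs.2])
    have := hle s hs.1.le hs.2.le
    simp only [Pi.sub_apply]
    linarith
  linarith

/-! ### The barrier -/

/-- The `y`-profile `φ(y) = 2 - m y^{1-a} + B y²` of the barrier. -/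
noncomputable def profile (a m B y : ℝ) : ℝ := 2 - m * y ^ (1 - a) + B * y ^ 2

lemma profile_continuous {a : ℝ} (ha : a < 1) (m B : ℝ) : Continuous (profile a m B) := by
  unfold profile
  have : Continuous fun y : ℝ => y ^ (1 - a) := Real.continuous_rpow_const (by linarith)
  fun_prop

lemma profile_zero {a : ℝ} (ha : a < 1) (m B : ℝ) : profile a m B 0 = 2 := by
  simp [profile, Real.zero_rpow (by linarith : 1 - a ≠ 0)]

lemma profile_hasDerivAt (a m B : ℝ) {y : ℝ} (hy : 0 < y) :
    HasDerivAt (profile a m B) (-(m * (1 - a)) * y ^ (-a) + 2 * B * y) y := by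
  have h1 : HasDerivAt (fun y : ℝ => y ^ (1 - a)) ((1 - a) * y ^ (1 - a - 1)) y :=
    Real.hasDerivAt_rpow_const (Or.inl hy.ne')
  have h2 := ((h1.const_mul m).const_sub 2).add ((hasDerivAt_pow 2 y).const_mul B)
  refine HasDerivAt.congr_deriv h2 ?_
  rw [show 1 - a - 1 = -a by ring]
  push_cast
  ring

lemma profile_contDiffAt (a m B : ℝ) {y : ℝ} (hy : 0 < y) : ContDiffAt ℝ 2 (profile a m B) y := by
  unfold profile
  have : ContDiffAt ℝ 2 (fun y : ℝ => y ^ (1 - a)) y := Real.contDiffAt_rpow_const_of_ne hy.ne'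
  fun_prop

lemma profile_deriv_deriv (a m B : ℝ) {y : ℝ} (hy : 0 < y) :
    deriv (deriv (profile a m B)) y = m * (1 - a) * a * y ^ (-a - 1) + 2 * B := by
  have h1 : deriv (profile a m B) =ᶠ[𝓝 y]
      fun y => -(m * (1 - a)) * y ^ (-a) + 2 * B * y := by
    filter_upwards [lt_mem_nhds hy] with z hz using (profile_hasDerivAt a m B hz).deriv
  rw [h1.deriv_eq]
  have h2 : HasDerivAt (fun y : ℝ => y ^ (-a)) (-a * y ^ (-a - 1)) y :=
    Real.hasDerivAt_rpow_const (Or.inl hy.ne')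
  have h3 := (h2.const_mul (-(m * (1 - a)))).add ((hasDerivAt_id y).const_mul (2 * B))
  rw [show deriv (fun y => -(m * (1 - a)) * y ^ (-a) + 2 * B * y) y = _ from h3.deriv]
  ring

/-- The `y^{1-a}` term of the profile lies in the kernel of the Bessel operator. -/
lemma profile_bessel (a m B : ℝ) {y : ℝ} (hy : 0 < y) :
    deriv (deriv (profile a m B)) y + a / y * deriv (profile a m B) y = 2 * B * (1 + a) := by
  rw [profile_deriv_deriv a m B hy, (profile_hasDerivAt a m B hy).deriv, Real.rpow_sub_one hy.ne']
  field_simp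
  ring

lemma exists_barrier_bound {a : ℝ} (ha : a ∈ Set.Ioo (-1 : ℝ) 1) {m : ℝ} (hm : 0 < m) :
    ∃ B : ℝ, 0 < B ∧ ∀ y : ℝ, 0 ≤ y → 1 + y ^ 2 ≤ profile a m B y := by
  have h1a : 0 < 1 - a := by linarith [ha.2]
  have h1a' : 0 < 1 + a := by linarith [ha.1]
  -- `δ` solves `m δ^{1-a} = 1`
  set δ : ℝ := (1 / m) ^ (1 / (1 - a)) with hδ
  have hδ0 : 0 < δ := by positivity
  refine ⟨m * δ ^ (-(1 + a)) + 1, by positivity, fun y hy => ?_⟩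
  unfold profile
  suffices h : m * y ^ (1 - a) ≤ 1 + m * δ ^ (-(1 + a)) * y ^ 2 by linarith
  rcases le_or_gt y δ with hle | hlt
  · have h2 : y ^ (1 - a) ≤ 1 / m := by
      calc y ^ (1 - a) ≤ δ ^ (1 - a) := Real.rpow_le_rpow hy hle h1a.le
        _ = 1 / m := by
          rw [hδ, ← Real.rpow_mul (by positivity), one_div_mul_cancel h1a.ne', Real.rpow_one]
    have h3 : m * y ^ (1 - a) ≤ 1 := by
      calc m * y ^ (1 - a) ≤ m * (1 / m) := by gcongr
        _ = 1 := by field_simp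
    have : 0 ≤ m * δ ^ (-(1 + a)) * y ^ 2 := by positivity
    linarith
  · have hy0 : 0 < y := hδ0.trans hlt
    have h2 : y ^ (1 - a) = y ^ (-(1 + a)) * y ^ 2 := by
      rw [← Real.rpow_natCast, ← Real.rpow_add hy0]
      congr 1
      push_cast
      ring
    have h3 : y ^ (-(1 + a)) ≤ δ ^ (-(1 + a)) :=
      Real.rpow_le_rpow_of_nonpos hδ0 hlt.le (by linarith)
    have h4 : m * (y ^ (-(1 + a)) * y ^ 2) ≤ m * (δ ^ (-(1 + a)) * y ^ 2) := by gcongr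
    rw [h2]
    linarith

/-! ### Contact points of a solution with a multiple of the barrier -/

/-- A solution `U` cannot touch `q Ψ` from below, up to the time of contact, at a point with `y > 0`:
`Ψ = φ(y) (1 + |x|²) e^{lt}` is a strict supersolution. -/
lemma interior_contact_absurd {n : ℕ} {a m B l q : ℝ} (ha : -1 < a) (hB : 0 < B) (hq : 0 < q)
    (hl : 2 * B * (1 + a) + 2 * n < l)
    (hprof : ∀ y : ℝ, 0 ≤ y → 1 + y ^ 2 ≤ profile a m B y)
    {U : EuclideanSpace ℝ (Fin n) × ℝ × ℝ → ℝ}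
    (hUsmooth : ContDiffOn ℝ (⊤ : ℕ∞) U {p : EuclideanSpace ℝ (Fin n) × ℝ × ℝ | 0 < p.2.1})
    {x : EuclideanSpace ℝ (Fin n)} {y t : ℝ} (hy : 0 < y) (ht : 0 < t)
    (hPDE : deriv (fun t' => U (x, y, t')) t
        = (∑ i : Fin n, iteratedDeriv 2
            (fun r : ℝ => U (x + r • EuclideanSpace.single i 1, y, t)) 0)
          + deriv (deriv (fun y' => U (x, y', t))) y
          + (a / y) * deriv (fun y' => U (x, y', t)) y)
    (hle : ∀ (x' : EuclideanSpace ℝ (Fin n)) (y' t' : ℝ), 0 ≤ y' → 0 ≤ t' → t' ≤ t →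
      U (x', y', t') ≤ q * (profile a m B y' * (1 + ‖x'‖ ^ 2) * Real.exp (l * t')))
    (heq : U (x, y, t) = q * (profile a m B y * (1 + ‖x‖ ^ 2) * Real.exp (l * t))) : False := by
  have hopen : IsOpen {p : EuclideanSpace ℝ (Fin n) × ℝ × ℝ | 0 < p.2.1} :=
    isOpen_lt continuous_const (by fun_prop)
  have hU : ContDiffAt ℝ 2 U (x, y, t) :=
    (hUsmooth.contDiffAt (hopen.mem_nhds (by simpa using hy))).of_le
      (WithTop.coe_le_coe.2 (le_top : (2 : ℕ∞) ≤ ⊤))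
  set E := Real.exp (l * t) with hE
  have hE0 : 0 < E := Real.exp_pos _
  set φ := profile a m B y with hφ
  have hφ1 : 1 ≤ φ := by
    have := hprof y hy.le
    nlinarith [sq_nonneg y]
  set X := 1 + ‖x‖ ^ 2 with hX
  have hX1 : 1 ≤ X := by rw [hX]; nlinarith [sq_nonneg ‖x‖]
  have hT : q * (φ * X * (l * E)) ≤ deriv (fun t' => U (x, y, t')) t := by
    have hg : HasDerivAt (fun t' => q * (φ * X * Real.exp (l * t'))) (q * (φ * X * (l * E))) t := by
      have h1 : HasDerivAt (fun t' => Real.exp (l * t')) (Real.exp (l * t) * (l * 1)) t :=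
        ((hasDerivAt_id t).const_mul l).exp
      refine ((h1.const_mul (φ * X)).const_mul q).congr_deriv ?_
      rw [hE]
      ring
    rw [← hg.deriv]
    refine deriv_le_of_contact_left ht ?_ hg.differentiableAt
      (fun s hs0 hst => hle x y s hy.le hs0 hst) heq
    have : ContDiffAt ℝ 2 (fun t' => U (x, y, t')) t :=
      ContDiffAt.comp (g := U) (f := fun t' => (x, y, t')) t hU (by fun_prop)
    exact this.differentiableAt (by norm_num)
  have hY : deriv (deriv (fun y' => U (x, y', t))) y + a / y * deriv (fun y' => U (x, y', t)) y
      ≤ q * X * E * (2 * B * (1 + a)) := by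
    have hf : ContDiffAt ℝ 2 (fun y' => U (x, y', t)) y :=
      ContDiffAt.comp (g := U) (f := fun y' => (x, y', t)) y hU (by fun_prop)
    have hg : ContDiffAt ℝ 2 (fun y' => q * X * E * profile a m B y') y :=
      contDiffAt_const.mul (profile_contDiffAt a m B hy)
    obtain ⟨h1, h2⟩ := deriv_deriv_le_of_contact hf hg
      (by
        filter_upwards [lt_mem_nhds hy] with z hz
        have := hle x z t hz.le ht.le le_rfl
        linarith)
      (by rw [heq]; ring)
    have h3 : deriv (fun y' => q * X * E * profile a m B y')
        = fun y' => q * X * E * deriv (profile a m B) y' := by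
      ext z
      exact deriv_const_mul_field _
    have h4 : deriv (deriv (fun y' => q * X * E * profile a m B y')) y
        = q * X * E * deriv (deriv (profile a m B)) y := by
      rw [h3]
      exact deriv_const_mul_field _
    rw [h4] at h2
    rw [h1, h3, ← profile_bessel a m B hy]
    simp only
    linarith
  have hXd : ∀ i : Fin n, iteratedDeriv 2
      (fun r : ℝ => U (x + r • EuclideanSpace.single i 1, y, t)) 0 ≤ q * φ * E * 2 := by
    intro i
    set g : ℝ → ℝ := fun r => q * φ * E * (X + 2 * x i * r + r ^ 2) with hgdef
    have hg1 : deriv g = fun r => q * φ * E * (2 * x i + 2 * r) := by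
      ext r
      have := (((hasDerivAt_id r).const_mul (2 * x i)).const_add X).add (hasDerivAt_pow 2 r)
      have := (this.const_mul (q * φ * E))
      rw [show deriv g r = _ from this.deriv]
      push_cast
      ring
    have hg2 : deriv (deriv g) 0 = q * φ * E * 2 := by
      rw [hg1]
      have := (((hasDerivAt_id (0 : ℝ)).const_mul 2).const_add (2 * x i)).const_mul (q * φ * E)
      rw [show deriv (fun r => q * φ * E * (2 * x i + 2 * r)) 0 = _ from this.deriv]
      ring
    have hnorm : ∀ r : ℝ, 1 + ‖x + r • EuclideanSpace.single i (1 : ℝ)‖ ^ 2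
        = X + 2 * x i * r + r ^ 2 := by
      intro r
      rw [norm_add_sq_real, norm_smul, inner_smul_right, EuclideanSpace.inner_single_right]
      simp [hX]
      ring
    have hf : ContDiffAt ℝ 2 (fun r : ℝ => U (x + r • EuclideanSpace.single i 1, y, t)) 0 :=
      ContDiffAt.comp (g := U)
        (f := fun r : ℝ => (x + r • EuclideanSpace.single i (1 : ℝ), y, t)) 0
        (by simpa using hU) (by fun_prop)
    have h2 := (deriv_deriv_le_of_contact (g := g) hf (by fun_prop)
      (Eventually.of_forall fun r => by
        have := hle (x + r • EuclideanSpace.single i 1) y t hy.le ht.le le_rfl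
        rw [hnorm] at this
        simp only [hgdef]
        linarith)
      (by simp only [hgdef, zero_smul, add_zero, heq]; ring)).2
    rw [hg2] at h2
    simpa [iteratedDeriv_succ, iteratedDeriv_zero] using h2
  have hsum : (∑ i : Fin n, iteratedDeriv 2
      (fun r : ℝ => U (x + r • EuclideanSpace.single i 1, y, t)) 0) ≤ n * (q * φ * E * 2) := by
    calc _ ≤ ∑ _i : Fin n, q * φ * E * 2 := Finset.sum_le_sum fun i _ => hXd i
      _ = _ := by simp
  have hqE : 0 < q * E := by positivity
  have hfin : φ * X * l ≤ n * φ * 2 + X * (2 * B * (1 + a)) := by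
    refine le_of_mul_le_mul_left ?_ hqE
    linarith
  have hn0 : (0 : ℝ) ≤ n := Nat.cast_nonneg n
  have hBa : 0 ≤ 2 * B * (1 + a) := by
    have : 0 < 1 + a := by linarith
    positivity
  have hφX : 0 < φ * X := by positivity
  have h1 : φ * X * (2 * B * (1 + a) + 2 * n) < φ * X * l := by gcongr
  have h2 : X * (2 * B * (1 + a)) ≤ φ * (X * (2 * B * (1 + a))) :=
    le_mul_of_one_le_left (by positivity) hφ1
  have h3 : n * φ * 2 ≤ X * (n * φ * 2) := le_mul_of_one_le_left (by positivity) hX1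
  linarith

/-- A function satisfying the weighted Neumann condition cannot touch `c φ(y)` from below at `y = 0`
when the coefficient `v` satisfies `|v| ≤ K` and `2 K < m (1 - a)`: the difference would be
increasing in `y` near `0`. -/
lemma boundary_contact_absurd {a m B c K v : ℝ} (ha : a ∈ Set.Ioo (-1 : ℝ) 1) (hc : 0 < c)
    (hK : 2 * K < m * (1 - a)) (hv : |v| ≤ K) {u : ℝ → ℝ}
    (hucont : ContinuousOn u (Set.Ici 0)) (hudiff : ∀ y, 0 < y → DifferentiableAt ℝ u y)
    (hN : Tendsto (fun y => y ^ a * deriv u y) (𝓝[>] (0 : ℝ)) (𝓝 (v * u 0)))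
    (hle : ∀ y, 0 ≤ y → u y ≤ c * profile a m B y) (heq : u 0 = c * profile a m B 0) : False := by
  have hu0 : u 0 = c * 2 := by rw [heq, profile_zero ha.2]
  have hψ : Tendsto (fun y : ℝ => y ^ a * (c * deriv (profile a m B) y)) (𝓝[>] (0 : ℝ))
      (𝓝 (c * (-(m * (1 - a))))) := by
    have h1 : Tendsto (fun y : ℝ => c * (-(m * (1 - a)) + 2 * B * y ^ (1 + a))) (𝓝[>] (0 : ℝ))
        (𝓝 (c * (-(m * (1 - a)) + 2 * B * (0 : ℝ) ^ (1 + a)))) := by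
      have : Continuous fun y : ℝ => y ^ (1 + a) :=
        Real.continuous_rpow_const (by linarith [ha.1])
      have : Continuous fun y : ℝ => c * (-(m * (1 - a)) + 2 * B * y ^ (1 + a)) := by fun_prop
      exact this.continuousAt.tendsto.mono_left nhdsWithin_le_nhds
    rw [Real.zero_rpow (by linarith [ha.1] : 1 + a ≠ 0), mul_zero, add_zero] at h1
    refine h1.congr' ?_
    filter_upwards [self_mem_nhdsWithin] with y hy
    have hy : 0 < y := hy
    rw [(profile_hasDerivAt a m B hy).deriv, Real.rpow_add hy, Real.rpow_one, Real.rpow_neg hy.le]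
    have := (Real.rpow_pos_of_pos hy a).ne'
    field_simp
  have hpos : 0 < v * u 0 - c * (-(m * (1 - a))) := by
    have := neg_abs_le v
    rw [hu0]
    have : 0 < c * (2 * v + m * (1 - a)) := mul_pos hc (by linarith)
    linarith
  have hev := (hN.sub hψ).eventually (lt_mem_nhds hpos)
  obtain ⟨δ, hδ, hδsub⟩ := mem_nhdsGT_iff_exists_Ioo_subset.1 hev
  have hδ : 0 < δ := hδ
  have hmono : StrictMonoOn (fun y => u y - c * profile a m B y) (Set.Ico 0 δ) := by
    refine strictMonoOn_of_deriv_pos (convex_Ico 0 δ) ?_ ?_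
    · exact (hucont.mono fun z hz => hz.1).sub
        (continuous_const.mul (profile_continuous ha.2 m B)).continuousOn
    · intro z hz
      rw [interior_Ico] at hz
      have h1 : 0 < z ^ a * deriv u z - z ^ a * (c * deriv (profile a m B) z) := hδsub hz
      have hp := (profile_hasDerivAt a m B hz.1).differentiableAt
      rw [deriv_fun_sub (hudiff z hz.1) (hp.const_mul c), deriv_const_mul_field]
      rw [← mul_sub] at h1
      exact pos_of_mul_pos_right h1 (Real.rpow_nonneg hz.1.le a)
  have h1 := hmono (a := 0) (b := δ / 2) ⟨le_rfl, hδ⟩ ⟨by linarith, by linarith⟩ (by linarith)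
  have h2 := hle (δ / 2) (by linarith)
  simp only at h1
  linarith

/-! ### The comparison argument -/

/-- One-sided comparison with zero: a bounded solution with zero initial data is nonpositive at all
later times. The Neumann condition is needed only pointwise in `(x,t)`. -/
lemma nonpos_of_extension_problem {n : ℕ} {a : ℝ} (ha : a ∈ Set.Ioo (-1 : ℝ) 1)
    {V : EuclideanSpace ℝ (Fin n) × ℝ → ℝ} (hVbdd : ∃ K : ℝ, ∀ p, |V p| ≤ K)
    {U : EuclideanSpace ℝ (Fin n) × ℝ × ℝ → ℝ}
    (hUcont : ContinuousOn U {p : EuclideanSpace ℝ (Fin n) × ℝ × ℝ | 0 ≤ p.2.1})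
    (hUbdd : ∃ M : ℝ, ∀ p : EuclideanSpace ℝ (Fin n) × ℝ × ℝ, 0 ≤ p.2.1 → |U p| ≤ M)
    (hUsmooth : ContDiffOn ℝ (⊤ : ℕ∞) U {p : EuclideanSpace ℝ (Fin n) × ℝ × ℝ | 0 < p.2.1})
    (hPDE : ∀ (x : EuclideanSpace ℝ (Fin n)) (y t : ℝ), 0 < y →
      deriv (fun t' => U (x, y, t')) t
        = (∑ i : Fin n, iteratedDeriv 2
            (fun r : ℝ => U (x + r • EuclideanSpace.single i 1, y, t)) 0)
          + deriv (deriv (fun y' => U (x, y', t))) y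
          + (a / y) * deriv (fun y' => U (x, y', t)) y)
    (hNeumann : ∀ (x : EuclideanSpace ℝ (Fin n)) (t : ℝ),
      Tendsto (fun y : ℝ => y ^ a * deriv (fun y' => U (x, y', t)) y)
        (𝓝[>] (0 : ℝ)) (𝓝 (V (x, t) * U (x, 0, t))))
    (hInit : ∀ (x : EuclideanSpace ℝ (Fin n)) (y : ℝ), 0 ≤ y → U (x, y, 0) = 0)
    (x : EuclideanSpace ℝ (Fin n)) (y t : ℝ) (hy : 0 ≤ y) (ht : 0 ≤ t) : U (x, y, t) ≤ 0 := by
  by_contra! hUpos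
  obtain ⟨K, hK⟩ := hVbdd
  obtain ⟨M, hM⟩ := hUbdd
  have h1a : 0 < 1 - a := by linarith [ha.2]
  have hK0 : 0 ≤ K := (abs_nonneg _).trans (hK (x, t))
  have hM0 : 0 ≤ M := (abs_nonneg _).trans (hM (x, y, t) hy)
  set m : ℝ := (2 * K + 1) / (1 - a) with hm
  have hmK : 2 * K < m * (1 - a) := by
    rw [hm, div_mul_cancel₀ _ h1a.ne']
    linarith
  obtain ⟨B, hB, hprof⟩ := exists_barrier_bound ha (m := m) (by positivity)
  set l : ℝ := 2 * B * (1 + a) + 2 * n + 1 with hl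
  have hl0 : 0 ≤ l := by
    have : 0 < 1 + a := by linarith [ha.1]
    positivity
  set Ψ : EuclideanSpace ℝ (Fin n) × ℝ × ℝ → ℝ :=
    fun p => profile a m B p.2.1 * (1 + ‖p.1‖ ^ 2) * Real.exp (l * p.2.2) with hΨ
  have hΨcont : Continuous Ψ := by
    have := profile_continuous ha.2 m B
    fun_prop
  have hΨlow : ∀ p : EuclideanSpace ℝ (Fin n) × ℝ × ℝ, 0 ≤ p.2.1 → 0 ≤ p.2.2 →
      1 + p.2.1 ^ 2 + ‖p.1‖ ^ 2 ≤ Ψ p := by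
    intro p h1 h2
    have h3 := hprof _ h1
    have h4 : 1 ≤ Real.exp (l * p.2.2) := Real.one_le_exp (by positivity)
    calc 1 + p.2.1 ^ 2 + ‖p.1‖ ^ 2 ≤ (1 + p.2.1 ^ 2) * (1 + ‖p.1‖ ^ 2) := by
          nlinarith [mul_nonneg (sq_nonneg p.2.1) (sq_nonneg ‖p.1‖)]
      _ ≤ profile a m B p.2.1 * (1 + ‖p.1‖ ^ 2) := by gcongr
      _ ≤ Ψ p := le_mul_of_one_le_right
          (mul_nonneg (le_trans (by positivity) h3) (by positivity)) h4
  have hΨpos : ∀ p : EuclideanSpace ℝ (Fin n) × ℝ × ℝ, 0 ≤ p.2.1 → 0 ≤ p.2.2 → 0 < Ψ p :=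
    fun p h1 h2 => lt_of_lt_of_le (by positivity) (hΨlow p h1 h2)
  set S : Set (EuclideanSpace ℝ (Fin n) × ℝ × ℝ) :=
    {p | 0 ≤ p.2.1 ∧ 0 ≤ p.2.2 ∧ p.2.2 ≤ t} with hS
  have hSclosed : IsClosed S := by
    refine IsClosed.and (isClosed_le ?_ ?_) (IsClosed.and (isClosed_le ?_ ?_) (isClosed_le ?_ ?_))
      <;> fun_prop
  have hcont : ContinuousOn (fun p => U p / Ψ p) S :=
    (hUcont.mono fun p hp => hp.1).div hΨcont.continuousOn
      fun p hp => (hΨpos p hp.1 hp.2.1).ne'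
  have hmem : (x, y, t) ∈ S := ⟨hy, ht, le_rfl⟩
  set q₀ := U (x, y, t) / Ψ (x, y, t) with hq₀
  have hq₀pos : 0 < q₀ := div_pos hUpos (hΨpos _ hy ht)
  -- outside the ball of radius `R`, the bound `Ψ ≥ R ≥ M / q₀` makes the quotient at most `q₀`
  set R := t + M / q₀ + 1 with hR
  have hMq : 0 ≤ M / q₀ := by positivity
  have hinf : ∀ᶠ p in cocompact (EuclideanSpace ℝ (Fin n) × ℝ × ℝ) ⊓ 𝓟 S,
      U p / Ψ p ≤ U (x, y, t) / Ψ (x, y, t) := by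
    rw [eventually_inf_principal]
    filter_upwards [(isCompact_closedBall
      (0 : EuclideanSpace ℝ (Fin n) × ℝ × ℝ) R).compl_mem_cocompact] with p hp hpS
    have hp' : R < ‖p‖ := by simpa using hp
    have hlow := hΨlow p hpS.1 hpS.2.1
    rw [div_le_iff₀ (hΨpos p hpS.1 hpS.2.1)]
    have hbig : R ≤ Ψ p := by
      rw [Prod.norm_def, Prod.norm_def, lt_max_iff, lt_max_iff] at hp'
      rcases hp' with h | h | h
      · nlinarith [sq_nonneg p.2.1]
      · rw [Real.norm_of_nonneg hpS.1] at h
        nlinarith [sq_nonneg ‖p.1‖]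
      · rw [Real.norm_of_nonneg hpS.2.1] at h
        linarith [hpS.2.2]
    calc U p ≤ M := (le_abs_self _).trans (hM p hpS.1)
      _ = q₀ * (M / q₀) := by field_simp
      _ ≤ q₀ * Ψ p := by
        gcongr
        linarith
  obtain ⟨⟨x₁, y₁, t₁⟩, hp₁, hmax⟩ := hcont.exists_isMaxOn' hSclosed hmem hinf
  obtain ⟨hy₁, ht₁, ht₁t⟩ := hp₁
  simp only at hy₁ ht₁ ht₁t
  set q := U (x₁, y₁, t₁) / Ψ (x₁, y₁, t₁) with hq
  have hqpos : 0 < q := hq₀pos.trans_le (hmax hmem)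
  have heq : U (x₁, y₁, t₁) = q * Ψ (x₁, y₁, t₁) := by
    rw [hq, div_mul_cancel₀ _ (hΨpos _ hy₁ ht₁).ne']
  have hle : ∀ (x' : EuclideanSpace ℝ (Fin n)) (y' t' : ℝ), 0 ≤ y' → 0 ≤ t' → t' ≤ t₁ →
      U (x', y', t') ≤ q * Ψ (x', y', t') := by
    intro x' y' t' h1 h2 h3
    have : U (x', y', t') / Ψ (x', y', t') ≤ q :=
      hmax (show (x', y', t') ∈ S from ⟨h1, h2, h3.trans ht₁t⟩)
    rwa [div_le_iff₀ (hΨpos _ h1 h2)] at this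
  have ht₁pos : 0 < t₁ := by
    rcases ht₁.eq_or_lt with h | h
    · rw [← h, hInit x₁ y₁ hy₁] at heq
      have := mul_pos hqpos (hΨpos (x₁, y₁, 0) hy₁ le_rfl)
      linarith
    · exact h
  rcases hy₁.eq_or_lt with h | h
  · subst h
    have hopen : IsOpen {p : EuclideanSpace ℝ (Fin n) × ℝ × ℝ | 0 < p.2.1} :=
      isOpen_lt continuous_const (by fun_prop)
    refine boundary_contact_absurd (u := fun y' => U (x₁, y', t₁)) (v := V (x₁, t₁)) (B := B)
      (c := q * ((1 + ‖x₁‖ ^ 2) * Real.exp (l * t₁))) ha (by positivity) hmK (hK _) ?_ ?_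
      (hNeumann x₁ t₁) ?_ ?_
    · exact hUcont.comp (f := fun y' : ℝ => (x₁, y', t₁)) (by fun_prop) fun z hz => hz
    · intro z hz
      have hU : DifferentiableAt ℝ U (x₁, z, t₁) :=
        (hUsmooth.contDiffAt (hopen.mem_nhds (by simpa using hz))).differentiableAt (by simp)
      exact DifferentiableAt.comp (g := U) (f := fun y' : ℝ => (x₁, y', t₁)) z hU (by fun_prop)
    · intro z hz
      refine (hle x₁ z t₁ hz ht₁ le_rfl).trans_eq ?_
      simp only [hΨ]
      ring
    · refine heq.trans ?_
      simp only [hΨ]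
      ring
  · exact interior_contact_absurd ha.1 hB hqpos (by linarith) hprof hUsmooth h ht₁pos
      (hPDE x₁ y₁ t₁ h) hle heq

/-- forward-in-time uniqueness for the degenerate extension problem. If `U`,
continuous and bounded on `ℝⁿ × [0,∞) × ℝ`, smooth on `{y > 0}` with bounded time derivative
and full spatial gradient extending continuously to `{y = 0}`, satisfies
`∂_t U = Δ_x U + ∂_{yy} U + (a/y) ∂_y U` for `y > 0`, the weighted Neumann condition
`y^a ∂_y U(x,y,t) → V(x,t) U(x,0,t)` as `y → 0⁺` locally uniformly in `(x,t)`, and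
`U(·,·,0) = 0`, then `U = 0` on `ℝⁿ × [0,∞) × [0,∞)`. -/
theorem forward_uniqueness_extension_problem
    (n : ℕ) (hn : 1 ≤ n) (a : ℝ) (ha : a ∈ Set.Ioo (-1 : ℝ) 1)
    (V : EuclideanSpace ℝ (Fin n) × ℝ → ℝ)
    (hVmeas : Measurable V) (hVbdd : ∃ K : ℝ, ∀ p, |V p| ≤ K)
    -- `U (x, y, t)` with `x ∈ ℝⁿ`, `y` the extension variable, `t` the time variable
    (U : EuclideanSpace ℝ (Fin n) × ℝ × ℝ → ℝ)
    (hUcont : ContinuousOn U {p : EuclideanSpace ℝ (Fin n) × ℝ × ℝ | 0 ≤ p.2.1})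
    (hUbdd : ∃ M : ℝ, ∀ p : EuclideanSpace ℝ (Fin n) × ℝ × ℝ, 0 ≤ p.2.1 → |U p| ≤ M)
    (hUsmooth : ContDiffOn ℝ (⊤ : ℕ∞) U {p : EuclideanSpace ℝ (Fin n) × ℝ × ℝ | 0 < p.2.1})
    -- the full differential (hence `∂_t U` and the spatial gradient `∇U`) on `{y > 0}`,
    -- bounded there and extending continuously up to `{y = 0}`
    (D : EuclideanSpace ℝ (Fin n) × ℝ × ℝ → (EuclideanSpace ℝ (Fin n) × ℝ × ℝ) →L[ℝ] ℝ)
    (hD : ∀ p : EuclideanSpace ℝ (Fin n) × ℝ × ℝ, 0 < p.2.1 → HasFDerivAt U (D p) p)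
    (hDbdd : ∃ M : ℝ, ∀ p : EuclideanSpace ℝ (Fin n) × ℝ × ℝ, 0 < p.2.1 → ‖D p‖ ≤ M)
    (hDcont : ContinuousOn D {p : EuclideanSpace ℝ (Fin n) × ℝ × ℝ | 0 ≤ p.2.1})
    -- the degenerate equation `∂_t U = Δ_x U + ∂_{yy} U + (a/y) ∂_y U` for `y > 0`
    (hPDE : ∀ (x : EuclideanSpace ℝ (Fin n)) (y t : ℝ), 0 < y →
      deriv (fun t' => U (x, y, t')) t
        = (∑ i : Fin n, iteratedDeriv 2
            (fun r : ℝ => U (x + r • EuclideanSpace.single i 1, y, t)) 0)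
          + deriv (deriv (fun y' => U (x, y', t))) y
          + (a / y) * deriv (fun y' => U (x, y', t)) y)
    -- the weighted Neumann condition, locally uniformly in `(x,t)`
    (hNeumann : ∀ K : Set (EuclideanSpace ℝ (Fin n) × ℝ), IsCompact K →
      TendstoUniformlyOn
        (fun (y : ℝ) (q : EuclideanSpace ℝ (Fin n) × ℝ) =>
          y ^ a * deriv (fun y' => U (q.1, y', q.2)) y)
        (fun q => V q * U (q.1, 0, q.2))
        (𝓝[>] (0 : ℝ)) K)
    -- the initial condition
    (hInit : ∀ (x : EuclideanSpace ℝ (Fin n)) (y : ℝ), 0 ≤ y → U (x, y, 0) = 0) :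
    ∀ (x : EuclideanSpace ℝ (Fin n)) (y t : ℝ), 0 ≤ y → 0 ≤ t → U (x, y, t) = 0 := by
  have hN : ∀ (x : EuclideanSpace ℝ (Fin n)) (t : ℝ),
      Tendsto (fun y : ℝ => y ^ a * deriv (fun y' => U (x, y', t)) y)
        (𝓝[>] (0 : ℝ)) (𝓝 (V (x, t) * U (x, 0, t))) := fun x t =>
    (hNeumann {(x, t)} isCompact_singleton).tendsto_at rfl
  intro x y t hy ht
  refine le_antisymm
    (nonpos_of_extension_problem ha hVbdd hUcont hUbdd hUsmooth hPDE hN hInit x y t hy ht) ?_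
  have hneg := nonpos_of_extension_problem (U := fun p => -U p) ha hVbdd hUcont.neg
    (by simpa using hUbdd) hUsmooth.neg ?_ ?_ ?_ x y t hy ht
  · simpa using hneg
  · intro x y t hy
    have := hPDE x y t hy
    simp only [deriv.fun_neg', iteratedDeriv_fun_neg, Finset.sum_neg_distrib, deriv.fun_neg] at this ⊢
    rw [this]
    ring
  · intro x t
    have := (hN x t).neg
    simp only [deriv.fun_neg]
    simpa using this
  · intro x y hy
    simp [hInit x y hy]
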